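/- For a real number M ≥ 0 let S(M) be the set of integers k with |k| ≤ M such that the equation (x²−36)(y²−36)(z²−36) + 468·(xyz−4330)² = k has a solution in real numbers x, y, z and, for every prime p, a solution in p-adic integers x, y, z ∈ ℤ_p. Then there exist constants c₁ > 0, c₂ > 0 and M₀ such that for all M ≥ M₀ one has c₁·M ≤ #S(M) ≤ c₂·M. -/

import Mathlib

/-- The integral model `𝒰_k` of the Markoff-type K3 surface
`(x²−36)(y²−36)(z²−36) + 468(xyz−4330)² = k` is everywhere locally solvable:
it has a real point and a `ℤ_p`-point for every prime `p`. -/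
def MK3LocallySolvable (k : ℤ) : Prop :=
  (∃ x y z : ℝ,
    (x ^ 2 - 36) * (y ^ 2 - 36) * (z ^ 2 - 36) + 468 * (x * y * z - 4330) ^ 2 = (k : ℝ)) ∧
  (∀ (p : ℕ) [Fact p.Prime], ∃ x y z : ℤ_[p],
    (x ^ 2 - 36) * (y ^ 2 - 36) * (z ^ 2 - 36) + 468 * (x * y * z - 4330) ^ 2 = (k : ℤ_[p]))

/-!
If `(y² - 36)(z² - 36) + 468 y²z² = 0`, the quadratic term in `x` of the equation cancels, and what
remains is linear in `x`. The point `(y, z) = (6/25, 12)` has this property, so every `k` is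
represented over any ring in which `168870 = 2 · 3 · 5 · 13 · 433` is invertible. In a Henselian
local ring where `168870` is not invertible, one takes `y = z = 0` and only has to extract a square
root of `1 + 4w` with `w` in the maximal ideal. Both `ℝ` and the rings `ℤ_p` are Henselian local
rings, so a whole residue class of integers `k` is everywhere locally solvable, and it has positive
density.
-/

section LocalPoints

variable {R : Type*} [CommRing R]

-- Substituting `x = 1 + 2s` gives `s² + s = w`, which has the simple root `0` modulo `I`; this
-- covers residue characteristic `2` as well.
theorem isSquare_one_add_four_mul_of_mem (I : Ideal R) [HenselianRing R I] {w : R} (hw : w ∈ I) :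
    IsSquare (1 + 4 * w) := by
  let f : Polynomial R := Polynomial.X ^ 2 + (Polynomial.X - Polynomial.C w)
  have f_monic : f.Monic :=
    Polynomial.monic_X_pow_add ((Polynomial.degree_X_sub_C_le w).trans_lt (by norm_num))
  have f_zero_mem : f.eval 0 ∈ I := by simpa [f] using hw
  have f_simple : IsUnit (Ideal.Quotient.mk I (f.derivative.eval 0)) := by simp [f]
  obtain ⟨s, hs, -⟩ := HenselianRing.is_henselian f f_monic 0 f_zero_mem f_simple
  have hs' : s ^ 2 + (s - w) = 0 := by simpa [f] using hs
  exact ⟨1 + 2 * s, by linear_combination -4 * hs'⟩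

/-- The polynomial `(x² - 36)(y² - 36)(z² - 36) + 468(xyz - 4330)²` whose level sets are the
surfaces `𝒰_k`, as a function on an arbitrary commutative ring, so that real and `p`-adic points
can be treated together. -/
def markoffK3 (x y z : R) : R :=
  (x ^ 2 - 36) * (y ^ 2 - 36) * (z ^ 2 - 36) + 468 * (x * y * z - 4330) ^ 2

theorem surjective_markoffK3_of_quadratic_term_eq_zero {y z : R}
    (hquad : (y ^ 2 - 36) * (z ^ 2 - 36) + 468 * (y * z) ^ 2 = 0)
    (hlin : IsUnit (2 * 468 * 4330 * (y * z))) :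
    Function.Surjective fun x ↦ markoffK3 x y z := by
  intro k
  obtain ⟨u, hu⟩ := hlin.exists_right_inv
  let d : R := 468 * 4330 ^ 2 + 36 * 468 * (y * z) ^ 2 - k
  refine ⟨u * d, ?_⟩
  simp only [markoffK3]
  linear_combination ((u * d) ^ 2 - 36) * hquad - d * hu

theorem isUnit_natCast_of_dvd_pow {m n i : ℕ} (hn : IsUnit (n : R)) (hmn : m ∣ n ^ i) :
    IsUnit (m : R) := by
  refine isUnit_of_dvd_unit ?_ (hn.pow i)
  exact_mod_cast Nat.cast_dvd_cast (α := R) hmn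

theorem exists_markoffK3_eq_of_isUnit (h : IsUnit (168870 : R)) (k : R) :
    ∃ x y z : R, markoffK3 x y z = k := by
  have isUnit_of_dvd {m : ℕ} (hm : m ∣ 168870 ^ 7) : IsUnit (m : R) :=
    isUnit_natCast_of_dvd_pow (by exact_mod_cast h) hm
  have h25 : IsUnit (25 : R) := by exact_mod_cast isUnit_of_dvd (m := 25) (by norm_num)
  obtain ⟨b, hb⟩ := h25.exists_right_inv
  have hquad : ((6 * b) ^ 2 - 36) * (12 ^ 2 - 36) + 468 * (6 * b * 12) ^ 2 = 0 := by
    linear_combination 36 * 108 * (25 * b + 1) * hb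
  have hlin : IsUnit (2 * 468 * 4330 * (6 * b * 12)) := by
    have hcoeff : IsUnit (2 * 468 * 4330 * 72 : R) := by
      exact_mod_cast isUnit_of_dvd (m := 2 * 468 * 4330 * 72) (by norm_num)
    have hb_unit : IsUnit b := .of_mul_eq_one_right 25 hb
    convert hcoeff.mul hb_unit using 1
    ring
  obtain ⟨x, hx⟩ := surjective_markoffK3_of_quadratic_term_eq_zero hquad hlin k
  exact ⟨x, 6 * b, 12, hx⟩

theorem exists_markoffK3_eq_add_of_mem (I : Ideal R) [HenselianRing R I] {w : R} (hw : w ∈ I) :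
    ∃ x y z : R, markoffK3 x y z = markoffK3 1 0 0 + 5184 * w := by
  obtain ⟨x, hx⟩ := isSquare_one_add_four_mul_of_mem I hw
  refine ⟨x, 0, 0, ?_⟩
  simp only [markoffK3]
  linear_combination -1296 * hx

theorem exists_markoffK3_eq_of_modEq [IsLocalRing R]
    [HenselianRing R (IsLocalRing.maximalIdeal R)] {k : ℤ}
    (hk : k ≡ markoffK3 1 0 0 [ZMOD 5184 * 168870]) :
    ∃ x y z : R, markoffK3 x y z = k := by
  by_cases h : IsUnit (168870 : R)
  · exact exists_markoffK3_eq_of_isUnit h k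
  · obtain ⟨t, ht⟩ := hk.symm.dvd
    have hw : (168870 * t : R) ∈ IsLocalRing.maximalIdeal R :=
      Ideal.mul_mem_right _ _ ((IsLocalRing.mem_maximalIdeal _).mpr h)
    have hkR : (k : R) = markoffK3 1 0 0 + 5184 * (168870 * t) := by
      have := congrArg (Int.cast : ℤ → R) ht
      simp only [markoffK3] at this ⊢
      push_cast at this
      linear_combination this
    rw [hkR]
    exact exists_markoffK3_eq_add_of_mem _ hw

end LocalPoints

theorem mk3LocallySolvable_of_modEq {k : ℤ}
    (hk : k ≡ markoffK3 1 0 0 [ZMOD 5184 * 168870]) : MK3LocallySolvable k :=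
  ⟨exists_markoffK3_eq_of_modEq hk, fun _ _ ↦ exists_markoffK3_eq_of_modEq hk⟩

theorem setOf_abs_intCast_le_eq_Icc (M : ℝ) :
    {k : ℤ | |(k : ℝ)| ≤ M} = Set.Icc (-⌊M⌋) ⌊M⌋ := by
  ext k
  simp only [Set.mem_ofPred_eq, Set.mem_Icc, abs_le, neg_le (a := ⌊M⌋), neg_le (a := M),
    Int.le_floor, Int.cast_neg]

theorem finite_setOf_abs_intCast_le (M : ℝ) : {k : ℤ | |(k : ℝ)| ≤ M}.Finite := by
  rw [setOf_abs_intCast_le_eq_Icc]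
  exact Set.finite_Icc _ _

theorem ncard_setOf_abs_intCast_le_and_le (P : ℤ → Prop) {M : ℝ} (hM : 0 ≤ M) :
    ({k : ℤ | |(k : ℝ)| ≤ M ∧ P k}.ncard : ℝ) ≤ 2 * M + 1 := by
  have floor_nonneg : 0 ≤ ⌊M⌋ := Int.floor_nonneg.mpr hM
  have ncard_Icc : ({k : ℤ | |(k : ℝ)| ≤ M}.ncard : ℤ) = 2 * ⌊M⌋ + 1 := by
    rw [setOf_abs_intCast_le_eq_Icc, ← Finset.coe_Icc, Set.ncard_coe_finset, Int.card_Icc]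
    lia
  calc ({k : ℤ | |(k : ℝ)| ≤ M ∧ P k}.ncard : ℝ)
      ≤ {k : ℤ | |(k : ℝ)| ≤ M}.ncard := by
        exact_mod_cast Set.ncard_le_ncard (Set.sep_subset _ P) (finite_setOf_abs_intCast_le M)
    _ = 2 * ⌊M⌋ + 1 := by exact_mod_cast ncard_Icc
    _ ≤ 2 * M + 1 := by linarith [Int.floor_le M]

theorem div_sub_one_le_card_Ioc_filter_modEq (a b v : ℤ) {N : ℤ} (hN : 0 < N) :
    ((b : ℝ) - a) / N - 1 ≤ ((Finset.Ioc a b).filter (· ≡ v [ZMOD N])).card := by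
  have card_ge : ⌊((b : ℚ) - v) / N⌋ - ⌊((a : ℚ) - v) / N⌋ ≤
      (((Finset.Ioc a b).filter (· ≡ v [ZMOD N])).card : ℤ) := by
    rw [Int.Ioc_filter_modEq_card a b hN]
    exact le_max_left _ _
  have card_ge_rat : (⌊((b : ℚ) - v) / N⌋ : ℚ) - ⌊((a : ℚ) - v) / N⌋ ≤
      ((Finset.Ioc a b).filter (· ≡ v [ZMOD N])).card := by
    exact_mod_cast card_ge
  have div_sub_one_le : ((b : ℚ) - a) / N - 1 ≤
      ((Finset.Ioc a b).filter (· ≡ v [ZMOD N])).card := by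
    have split_div : ((b : ℚ) - a) / N = (b - v) / N - (a - v) / N := by ring
    linarith [Int.lt_floor_add_one (((b : ℚ) - v) / N), Int.floor_le (((a : ℚ) - v) / N)]
  exact_mod_cast div_sub_one_le

theorem div_le_ncard_setOf_abs_intCast_le_and_of_modEq {P : ℤ → Prop} {N v : ℤ} (hN : 0 < N)
    (hP : ∀ k, k ≡ v [ZMOD N] → P k) {M : ℝ} (hM : N + 2 ≤ M) :
    M / N ≤ {k : ℤ | |(k : ℝ)| ≤ M ∧ P k}.ncard := by
  have hN' : (0 : ℝ) < N := by exact_mod_cast hN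
  have subset_setOf : ((Finset.Ioc (-⌊M⌋) ⌊M⌋).filter (· ≡ v [ZMOD N]) : Set ℤ) ⊆
      {k : ℤ | |(k : ℝ)| ≤ M ∧ P k} := by
    intro k hk
    obtain ⟨hk_Ioc, hk_modEq⟩ := Finset.mem_filter.mp hk
    have hk_abs : k ∈ {k : ℤ | |(k : ℝ)| ≤ M} := by
      rw [setOf_abs_intCast_le_eq_Icc]
      exact Set.Ioc_subset_Icc_self (Finset.mem_Ioc.mp hk_Ioc)
    exact ⟨hk_abs, hP k hk_modEq⟩
  calc M / N ≤ ((⌊M⌋ : ℝ) - (-⌊M⌋ : ℤ)) / N - 1 := by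
        rw [le_sub_iff_add_le, div_add_one hN'.ne']
        gcongr
        push_cast
        linarith [Int.lt_floor_add_one M]
    _ ≤ ((Finset.Ioc (-⌊M⌋) ⌊M⌋).filter (· ≡ v [ZMOD N])).card :=
        div_sub_one_le_card_Ioc_filter_modEq _ _ _ hN
    _ ≤ {k : ℤ | |(k : ℝ)| ≤ M ∧ P k}.ncard := by
        rw [← Set.ncard_coe_finset]
        exact_mod_cast Set.ncard_le_ncard subset_setOf
          ((finite_setOf_abs_intCast_le M).subset (Set.sep_subset _ P))

/-- first counting assertion of Theorem 5.4. The number of `k ∈ ℤ` with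
`|k| ≤ M` for which `𝒰_k` is everywhere locally solvable is `≍ M` as `M → ∞`. -/
theorem stmt9 :
    ∃ c₁ c₂ M₀ : ℝ, 0 < c₁ ∧ 0 < c₂ ∧ ∀ M : ℝ, M₀ ≤ M →
      c₁ * M ≤ ({k : ℤ | |(k : ℝ)| ≤ M ∧ MK3LocallySolvable k}.ncard : ℝ) ∧
      ({k : ℤ | |(k : ℝ)| ≤ M ∧ MK3LocallySolvable k}.ncard : ℝ) ≤ c₂ * M := by
  let N : ℤ := 5184 * 168870
  have hN : 0 < N := by norm_num [N]
  have hN' : (0 : ℝ) < N := by exact_mod_cast hN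
  refine ⟨1 / N, 3, N + 2, by positivity, by norm_num, fun M hM ↦ ⟨?_, ?_⟩⟩
  · rw [one_div_mul_eq_div]
    exact div_le_ncard_setOf_abs_intCast_le_and_of_modEq hN
      (fun _ ↦ mk3LocallySolvable_of_modEq) hM
  · calc ({k : ℤ | |(k : ℝ)| ≤ M ∧ MK3LocallySolvable k}.ncard : ℝ)
        ≤ 2 * M + 1 := ncard_setOf_abs_intCast_le_and_le _ (by linarith)
      _ ≤ 3 * M := by linarith
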